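/- Fix n ≥ 1 and ε > 0, and let u : ℝⁿ × [0,∞) → ℝ be a smooth solution of ∂ₜu = Δu − (1/ε²) f(u) with f(u) = 2u(u²−1), |u| ≤ 1, such that for every T > 0 the function u and its spatial derivatives up to third order and its time derivative are uniformly bounded on ℝⁿ × [0,T]. Let μᵗ denote the measure with density (ε/2)|∇u(x,t)|² + (1/ε)F(u(x,t)) with respect to Lebesgue measure, F(u) = (1/2)(1−u²)². Assume (ε/2)|∇u(x,t)|² ≤ (1/ε)F(u(x,t)) for all x ∈ ℝⁿ and t ≥ 0, and that sup_{x ∈ ℝⁿ, R > 0} μ⁰(B_R(x))/R^{n−1} < ∞. Then there is a constant C > 0 depending only on n such that for all t ≥ 0, sup_{x ∈ ℝⁿ, R > 0} μᵗ(B_R(x))/R^{n−1} ≤ C · sup_{x ∈ ℝⁿ, R > 0} μ⁰(B_R(x))/R^{n−1}. -/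

import Mathlib

open Real MeasureTheory Metric ENNReal

/-- The Laplacian of `f : ℝⁿ → ℝ` at `x`, as the sum of the second partial derivatives in
the coordinate directions. -/
noncomputable def spaceLaplacian (n : ℕ) (f : EuclideanSpace ℝ (Fin n) → ℝ)
    (x : EuclideanSpace ℝ (Fin n)) : ℝ :=
  ∑ i : Fin n,
    fderiv ℝ (fun y => fderiv ℝ f y (EuclideanSpace.single i (1 : ℝ))) x
      (EuclideanSpace.single i (1 : ℝ))

/-- `sup_{x ∈ ℝⁿ, R > 0} μ(B_R(x)) / R^{n-1}`, the optimal `(n-1)`-dimensional area growth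
ratio of a measure on `ℝⁿ`. -/
noncomputable def areaRatio (n : ℕ) (μ : Measure (EuclideanSpace ℝ (Fin n))) : ℝ≥0∞ :=
  ⨆ (x : EuclideanSpace ℝ (Fin n)) (R : ℝ) (_ : 0 < R),
    μ (Metric.ball x R) / ENNReal.ofReal (R ^ ((n : ℝ) - 1))

/-!
The proof is Huisken's monotonicity argument in Ilmanen's form for the Allen–Cahn equation. Let `e`
be the energy density and, with `τ = s - t` and `z = x - y`, let
`ρ = τ^((1 - n) / 2) exp(-|z|² / (4τ))`. Then `ρ⁻¹ ∂ₜ(ρ e)` is a weighted divergence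
`ρ⁻¹ div (ρ F)`, minus `ε (∂ₜu - z · ∇u / (2τ))²`, minus `1 / (2τ)` times
`W(u) / ε - ε |∇u|² / 2`. The divergence integrates to zero and the subtracted terms are
nonnegative, so `∫ ρ e` is nonincreasing on `[0, s)`.

To bound the energy of the ball `B_R(y)` at time `t`, take `s = t + R²`. At time `t` the weight `ρ`
is at least `exp(-1/4) R^(1 - n)` on that ball. At time `0` it has width `√s`, and covering `ℝⁿ` by
the concentric balls of radius `(k + 1) √s` bounds its integral by a constant times the area ratio,
whatever `s` is.
-/

namespace AllenCahn

/-! ### Gaussian weights and ball growth -/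

section GaussianWeight

variable {X : Type*} [PseudoMetricSpace X] {m τ R : ℝ} {x y : X}

/-- The `m`-dimensional Gaussian centred at `y` at scale `√τ`, without its factor `(4π)^(-m/2)`.
With `m = n - 1` and `τ = s - t` it is the weight of Huisken's monotonicity formula. -/
noncomputable def gaussianWeight (m : ℝ) (y : X) (τ : ℝ) (x : X) : ℝ :=
  τ ^ (-(m / 2)) * exp (-(dist x y ^ 2 / (4 * τ)))

lemma gaussianWeight_pos (hτ : 0 < τ) : 0 < gaussianWeight m y τ x :=
  mul_pos (rpow_pos_of_pos hτ _) (exp_pos _)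

@[fun_prop]
lemma continuous_gaussianWeight (m : ℝ) (y : X) (τ : ℝ) : Continuous (gaussianWeight m y τ) := by
  unfold gaussianWeight
  fun_prop

lemma gaussianWeight_sq (hR : 0 < R) :
    gaussianWeight m y (R ^ 2) x = (R ^ m)⁻¹ * exp (-((dist x y / R) ^ 2 / 4)) := by
  have hscale : (R ^ 2) ^ (-(m / 2)) = (R ^ m)⁻¹ := by
    rw [← Real.rpow_natCast, ← rpow_mul hR.le, ← rpow_neg hR.le]
    congr 1
    push_cast
    ring
  rw [gaussianWeight, hscale]
  congr 3
  field_simp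

lemma one_le_mul_gaussianWeight_of_mem_ball (hR : 0 < R) (hx : x ∈ ball y R) :
    1 ≤ exp (1 / 4) * R ^ m * gaussianWeight m y (R ^ 2) x := by
  have hquot : dist x y / R ≤ 1 := (div_le_one₀ hR).2 (mem_ball.1 hx).le
  have hsq : (dist x y / R) ^ 2 ≤ 1 := pow_le_one₀ (by positivity) hquot
  calc 1 ≤ exp (1 / 4 + -((dist x y / R) ^ 2 / 4)) := one_le_exp (by linarith)
    _ = exp (1 / 4) * R ^ m * gaussianWeight m y (R ^ 2) x := by
        rw [gaussianWeight_sq hR, exp_add]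
        field_simp

lemma gaussianWeight_le_tsum_indicator_ball (hR : 0 < R) :
    ENNReal.ofReal (gaussianWeight m y (R ^ 2) x) ≤
      ∑' k : ℕ, ENNReal.ofReal ((R ^ m)⁻¹ * exp (1 - k)) *
        (ball y ((k + 1) * R)).indicator 1 x := by
  set r := dist x y / R
  have hx : x ∈ ball y ((⌊r⌋₊ + 1) * R) :=
    mem_ball.2 ((div_lt_iff₀ hR).1 (Nat.lt_floor_add_one r))
  have hfloor : (⌊r⌋₊ : ℝ) ≤ r := Nat.floor_le (by positivity)
  refine le_trans ?_ (ENNReal.le_tsum ⌊r⌋₊)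
  rw [Set.indicator_of_mem hx, Pi.one_apply, mul_one, gaussianWeight_sq hR]
  gcongr
  linarith [sq_nonneg (r - 2)]

variable [MeasurableSpace X] [OpensMeasurableSpace X]

lemma measure_ball_le_lintegral_gaussianWeight (μ : Measure X) (m : ℝ) (y : X) (hR : 0 < R) :
    μ (ball y R) ≤ ENNReal.ofReal (exp (1 / 4) * R ^ m) *
      ∫⁻ x, ENNReal.ofReal (gaussianWeight m y (R ^ 2) x) ∂μ := by
  calc μ (ball y R) = ∫⁻ _ in ball y R, 1 ∂μ := (setLIntegral_one _).symm
    _ ≤ ∫⁻ x in ball y R, ENNReal.ofReal (exp (1 / 4) * R ^ m) *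
          ENNReal.ofReal (gaussianWeight m y (R ^ 2) x) ∂μ := by
        refine setLIntegral_mono' measurableSet_ball fun x hx ↦ ?_
        rw [← ENNReal.ofReal_mul (by positivity), ENNReal.one_le_ofReal]
        exact one_le_mul_gaussianWeight_of_mem_ball hR hx
    _ ≤ ∫⁻ x, ENNReal.ofReal (exp (1 / 4) * R ^ m) *
          ENNReal.ofReal (gaussianWeight m y (R ^ 2) x) ∂μ := setLIntegral_le_lintegral _ _
    _ = _ := lintegral_const_mul' _ _ ENNReal.ofReal_ne_top

/-- A bound for the Gaussian mass of a measure with `μ (B_R) ≤ R ^ m`; the `k`-th term is the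
contribution of the annulus `k √τ ≤ dist x y < (k + 1) √τ`. -/
noncomputable def gaussianMassBound (m : ℝ) : ℝ≥0∞ :=
  ∑' k : ℕ, ENNReal.ofReal (exp (1 - k) * (k + 1) ^ m)

lemma gaussianMassBound_pos (m : ℝ) : 0 < gaussianMassBound m :=
  lt_of_lt_of_le (by simp [exp_pos]) (ENNReal.le_tsum 0)

lemma gaussianMassBound_ne_top (m : ℝ) : gaussianMassBound m ≠ ⊤ := by
  have hpow : Summable fun k : ℕ ↦
      exp 2 * (((k + 1 : ℕ) : ℝ) ^ ⌈m⌉₊ * exp (-1 * ((k + 1 : ℕ) : ℝ))) :=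
    ((summable_nat_add_iff 1).2 (summable_pow_mul_exp_neg_nat_mul ⌈m⌉₊ one_pos)).mul_left _
  have hsum : Summable fun k : ℕ ↦ exp (1 - k) * ((k : ℝ) + 1) ^ m := by
    refine hpow.of_nonneg_of_le (fun k ↦ by positivity) fun k ↦ ?_
    have hrpow : ((k : ℝ) + 1) ^ m ≤ ((k : ℝ) + 1) ^ ⌈m⌉₊ := by
      rw [← Real.rpow_natCast]
      exact rpow_le_rpow_of_exponent_le (by simp) (Nat.le_ceil m)
    calc exp (1 - k) * ((k : ℝ) + 1) ^ m ≤ exp (1 - k) * ((k : ℝ) + 1) ^ ⌈m⌉₊ := by gcongr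
      _ = exp (2 + -1 * ((k + 1 : ℕ) : ℝ)) * ((k : ℝ) + 1) ^ ⌈m⌉₊ := by
          congr 2
          push_cast
          ring
      _ = _ := by
          rw [exp_add]
          push_cast
          ring
  rw [gaussianMassBound, ← ENNReal.ofReal_tsum_of_nonneg (fun k ↦ by positivity) hsum]
  exact ENNReal.ofReal_ne_top

theorem lintegral_gaussianWeight_le (μ : Measure X) {A : ℝ≥0∞}
    (hμ : ∀ R, 0 < R → μ (ball y R) ≤ A * ENNReal.ofReal (R ^ m)) (hτ : 0 < τ) :
    ∫⁻ x, ENNReal.ofReal (gaussianWeight m y τ x) ∂μ ≤ gaussianMassBound m * A := by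
  obtain ⟨R, hR, rfl⟩ : ∃ R, 0 < R ∧ R ^ 2 = τ := ⟨√τ, sqrt_pos.2 hτ, sq_sqrt hτ.le⟩
  calc ∫⁻ x, ENNReal.ofReal (gaussianWeight m y (R ^ 2) x) ∂μ
      ≤ ∫⁻ x, ∑' k : ℕ, ENNReal.ofReal ((R ^ m)⁻¹ * exp (1 - k)) *
          (ball y ((k + 1) * R)).indicator 1 x ∂μ :=
        lintegral_mono fun _ ↦ gaussianWeight_le_tsum_indicator_ball hR
    _ = ∑' k : ℕ, ENNReal.ofReal ((R ^ m)⁻¹ * exp (1 - k)) * μ (ball y ((k + 1) * R)) := by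
        have hmeas (k : ℕ) : Measurable ((ball y ((k + 1) * R)).indicator (1 : X → ℝ≥0∞)) :=
          measurable_one.indicator measurableSet_ball
        rw [lintegral_tsum fun k ↦ ((hmeas k).const_mul _).aemeasurable]
        congr! 2 with k
        rw [lintegral_const_mul _ (hmeas k), lintegral_indicator_one measurableSet_ball]
    _ ≤ ∑' k : ℕ, ENNReal.ofReal ((R ^ m)⁻¹ * exp (1 - k)) *
          (A * ENNReal.ofReal (((k + 1) * R) ^ m)) := by
        gcongr with k
        exact hμ _ (by positivity)
    _ = ∑' k : ℕ, ENNReal.ofReal (exp (1 - k) * (k + 1) ^ m) * A := by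
        congr! 2 with k
        rw [mul_comm A, ← mul_assoc, ← ENNReal.ofReal_mul (by positivity),
          mul_rpow (by positivity) hR.le]
        congr 2
        field_simp
    _ = gaussianMassBound m * A := ENNReal.tsum_mul_right

end GaussianWeight

/-! ### Directional derivatives in space-time -/

section DirDeriv

variable {V : Type*} [NormedAddCommGroup V] [NormedSpace ℝ V] {f g : V → ℝ} {p : V}

/-- The derivative of `g` in the direction `v`, as a function of the base point, so that it can be
iterated. -/
noncomputable def dirDeriv (v : V) (g : V → ℝ) (p : V) : ℝ :=
  fderiv ℝ g p v

lemma contDiff_dirDeriv {k : WithTop ℕ∞} (hg : ContDiff ℝ (k + 1) g) (v : V) :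
    ContDiff ℝ k (dirDeriv v g) :=
  (hg.fderiv_right le_rfl).clm_apply contDiff_const

lemma dirDeriv_comm (hg : ContDiff ℝ 2 g) (v w : V) :
    dirDeriv v (dirDeriv w g) = dirDeriv w (dirDeriv v g) := by
  funext p
  have hsnd (a b : V) : dirDeriv a (dirDeriv b g) p = fderiv ℝ (fderiv ℝ g) p a b := by
    have hdiff : DifferentiableAt ℝ (fderiv ℝ g) p :=
      (hg.fderiv_right (m := 1) (by norm_num)).differentiable one_ne_zero p
    unfold dirDeriv
    rw [fderiv_clm_apply hdiff (differentiableAt_const b)]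
    simp
  rw [hsnd, hsnd]
  exact hg.contDiffAt.isSymmSndFDerivAt (by simp) v w

lemma dirDeriv_const (c : ℝ) (v : V) : dirDeriv v (fun _ ↦ c) p = 0 := by
  simp [dirDeriv]

lemma dirDeriv_add (hf : DifferentiableAt ℝ f p) (hg : DifferentiableAt ℝ g p) (v : V) :
    dirDeriv v (fun q ↦ f q + g q) p = dirDeriv v f p + dirDeriv v g p := by
  simp [dirDeriv, fderiv_fun_add hf hg]

lemma dirDeriv_sub (hf : DifferentiableAt ℝ f p) (hg : DifferentiableAt ℝ g p) (v : V) :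
    dirDeriv v (fun q ↦ f q - g q) p = dirDeriv v f p - dirDeriv v g p := by
  simp [dirDeriv, fderiv_fun_sub hf hg]

lemma dirDeriv_mul (hf : DifferentiableAt ℝ f p) (hg : DifferentiableAt ℝ g p) (v : V) :
    dirDeriv v (fun q ↦ f q * g q) p = f p * dirDeriv v g p + g p * dirDeriv v f p := by
  simp [dirDeriv, fderiv_fun_mul hf hg]

lemma dirDeriv_const_mul (hg : DifferentiableAt ℝ g p) (c : ℝ) (v : V) :
    dirDeriv v (fun q ↦ c * g q) p = c * dirDeriv v g p := by
  simp [dirDeriv, fderiv_const_mul hg]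

lemma dirDeriv_sum {ι : Type*} {s : Finset ι} {G : ι → V → ℝ}
    (hG : ∀ i ∈ s, DifferentiableAt ℝ (G i) p) (v : V) :
    dirDeriv v (fun q ↦ ∑ i ∈ s, G i q) p = ∑ i ∈ s, dirDeriv v (G i) p := by
  simp [dirDeriv, fderiv_fun_sum hG]

lemma dirDeriv_comp {W : ℝ → ℝ} (hW : DifferentiableAt ℝ W (g p)) (hg : DifferentiableAt ℝ g p)
    (v : V) : dirDeriv v (fun q ↦ W (g q)) p = deriv W (g p) * dirDeriv v g p := by
  have h : HasFDerivAt (fun q ↦ W (g q)) (deriv W (g p) • fderiv ℝ g p) p :=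
    hW.hasDerivAt.comp_hasFDerivAt p hg.hasFDerivAt
  simp [dirDeriv, h.fderiv]

end DirDeriv

section Slice

variable {E : Type*} [NormedAddCommGroup E] [NormedSpace ℝ E] {g : E × ℝ → ℝ} {x : E} {t : ℝ}

lemma fderiv_slice_apply (hg : DifferentiableAt ℝ g (x, t)) (v : E) :
    fderiv ℝ (fun y ↦ g (y, t)) x v = dirDeriv (v, 0) g (x, t) := by
  have h : HasFDerivAt (fun y ↦ g (y, t)) ((fderiv ℝ g (x, t)).comp (.inl ℝ E ℝ)) x :=
    hg.hasFDerivAt.comp x (hasFDerivAt_prodMk_left x t)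
  simp [h.fderiv, dirDeriv]

lemma hasDerivAt_time (hg : DifferentiableAt ℝ g (x, t)) :
    HasDerivAt (fun r ↦ g (x, r)) (dirDeriv (0, 1) g (x, t)) t :=
  hg.hasFDerivAt.comp_hasDerivAt t ((hasDerivAt_const t x).prodMk (hasDerivAt_id t))

end Slice

/-! ### Functions of polynomial growth on a space-time slab -/

section PolyGrowth

variable {E : Type*} [NormedAddCommGroup E] {I : Set ℝ} {f g : E × ℝ → ℝ}

/-- The algebra of functions on `E × ℝ` that are continuous on the slab `E × I` and grow there at
most polynomially in space, uniformly in time. -/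
def polyGrowth (E : Type*) [NormedAddCommGroup E] (I : Set ℝ) : Subalgebra ℝ (E × ℝ → ℝ) where
  carrier := {g | ContinuousOn g (Set.univ ×ˢ I) ∧
    ∃ (K : ℝ) (k : ℕ), ∀ x, ∀ t ∈ I, |g (x, t)| ≤ K * (1 + ‖x‖) ^ k}
  add_mem' := by
    rintro f g ⟨hf, K, k, hfK⟩ ⟨hg, L, l, hgL⟩
    refine ⟨hf.add hg, |K| + |L|, k + l, fun x t ht ↦ ?_⟩
    have hx : 1 ≤ 1 + ‖x‖ := by simp
    calc |f (x, t) + g (x, t)| ≤ |f (x, t)| + |g (x, t)| := abs_add_le _ _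
      _ ≤ K * (1 + ‖x‖) ^ k + L * (1 + ‖x‖) ^ l := add_le_add (hfK x t ht) (hgL x t ht)
      _ ≤ |K| * (1 + ‖x‖) ^ (k + l) + |L| * (1 + ‖x‖) ^ (k + l) := by
          gcongr
          exacts [le_abs_self K, Nat.le_add_right k l, le_abs_self L, Nat.le_add_left l k]
      _ = (|K| + |L|) * (1 + ‖x‖) ^ (k + l) := by ring
  mul_mem' := by
    rintro f g ⟨hf, K, k, hfK⟩ ⟨hg, L, l, hgL⟩
    refine ⟨hf.mul hg, K * L, k + l, fun x t ht ↦ ?_⟩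
    calc |f (x, t) * g (x, t)| = |f (x, t)| * |g (x, t)| := abs_mul _ _
      _ ≤ (K * (1 + ‖x‖) ^ k) * (L * (1 + ‖x‖) ^ l) :=
          mul_le_mul (hfK x t ht) (hgL x t ht) (abs_nonneg _) ((abs_nonneg _).trans (hfK x t ht))
      _ = K * L * (1 + ‖x‖) ^ (k + l) := by ring
  algebraMap_mem' c := ⟨continuousOn_const, |c|, 0, fun x t _ ↦ by simp⟩

lemma mem_polyGrowth_of_bounded (hg : ContinuousOn g (Set.univ ×ˢ I)) {C : ℝ}
    (hC : ∀ x, ∀ t ∈ I, |g (x, t)| ≤ C) : g ∈ polyGrowth E I :=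
  ⟨hg, C, 0, by simpa using hC⟩

lemma polyGrowth_congr (hf : f ∈ polyGrowth E I) (hfg : ∀ x, ∀ t ∈ I, f (x, t) = g (x, t)) :
    g ∈ polyGrowth E I := by
  obtain ⟨hcont, K, k, hK⟩ := hf
  refine ⟨hcont.congr fun p hp ↦ (hfg p.1 p.2 hp.2).symm, K, k, fun x t ht ↦ ?_⟩
  rw [← hfg x t ht]
  exact hK x t ht

lemma continuous_slice_of_mem_polyGrowth (hg : g ∈ polyGrowth E I) {t : ℝ} (ht : t ∈ I) :
    Continuous fun x ↦ g (x, t) :=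
  hg.1.comp_continuous (by fun_prop) fun x ↦ ⟨Set.mem_univ x, ht⟩

variable [NormedSpace ℝ E]

/-- The algebra of `C¹` functions on `E × ℝ` that have polynomial growth on the slab `E × I`
together with their first derivatives in space. The time derivative is not controlled. -/
def polyGrowthC1 (E : Type*) [NormedAddCommGroup E] [NormedSpace ℝ E] (I : Set ℝ) :
    Subalgebra ℝ (E × ℝ → ℝ) where
  carrier := {g | ContDiff ℝ 1 g ∧ g ∈ polyGrowth E I ∧
    ∀ v : E, dirDeriv (v, 0) g ∈ polyGrowth E I}
  add_mem' := by
    rintro f g ⟨hf, hfI, hf'⟩ ⟨hg, hgI, hg'⟩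
    refine ⟨hf.add hg, add_mem hfI hgI, fun v ↦ ?_⟩
    rw [show dirDeriv (v, 0) (f + g) = dirDeriv (v, 0) f + dirDeriv (v, 0) g from
      funext fun p ↦ dirDeriv_add (hf.differentiable one_ne_zero p)
        (hg.differentiable one_ne_zero p) _]
    exact add_mem (hf' v) (hg' v)
  mul_mem' := by
    rintro f g ⟨hf, hfI, hf'⟩ ⟨hg, hgI, hg'⟩
    refine ⟨hf.mul hg, mul_mem hfI hgI, fun v ↦ ?_⟩
    rw [show dirDeriv (v, 0) (f * g) = f * dirDeriv (v, 0) g + g * dirDeriv (v, 0) f from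
      funext fun p ↦ dirDeriv_mul (hf.differentiable one_ne_zero p)
        (hg.differentiable one_ne_zero p) _]
    exact add_mem (mul_mem hfI (hg' v)) (mul_mem hgI (hf' v))
  algebraMap_mem' c := by
    refine ⟨contDiff_const, algebraMap_mem _ c, fun v ↦ ?_⟩
    rw [show dirDeriv (v, 0) (algebraMap ℝ (E × ℝ → ℝ) c) = 0 from
      funext fun p ↦ dirDeriv_const c _]
    exact zero_mem _

lemma polyGrowthC1_congr (hf : f ∈ polyGrowthC1 E I) (hg : ContDiff ℝ 1 g)
    (hfg : ∀ x, ∀ t ∈ I, f (x, t) = g (x, t)) : g ∈ polyGrowthC1 E I := by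
  refine ⟨hg, polyGrowth_congr hf.2.1 hfg, fun v ↦ polyGrowth_congr (hf.2.2 v) fun x t ht ↦ ?_⟩
  rw [← fderiv_slice_apply (hf.1.differentiable one_ne_zero _),
    ← fderiv_slice_apply (hg.differentiable one_ne_zero _)]
  simp_rw [fun y ↦ hfg y t ht]

lemma clm_mem_polyGrowthC1 (ℓ : E →L[ℝ] ℝ) : (fun p ↦ ℓ p.1) ∈ polyGrowthC1 E I := by
  refine ⟨by fun_prop, ⟨by fun_prop, ‖ℓ‖, 1, fun x t _ ↦ ?_⟩, fun v ↦ ?_⟩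
  · calc |ℓ x| ≤ ‖ℓ‖ * ‖x‖ := ℓ.le_opNorm x
      _ ≤ ‖ℓ‖ * (1 + ‖x‖) ^ 1 := by gcongr; simp
  · have hderiv : dirDeriv (v, 0) (fun p : E × ℝ ↦ ℓ p.1) = fun _ ↦ ℓ v := by
      funext p
      have h : HasFDerivAt (fun q : E × ℝ ↦ ℓ q.1) (ℓ.comp (.fst ℝ E ℝ)) p :=
        (ℓ.comp (.fst ℝ E ℝ)).hasFDerivAt
      simp [dirDeriv, h.fderiv]
    rw [hderiv]
    exact algebraMap_mem _ (ℓ v)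

lemma comp_mem_polyGrowthC1 {W : ℝ → ℝ} (hW : ContDiff ℝ 1 W) (hg : g ∈ polyGrowthC1 E I) {C : ℝ}
    (hC : ∀ x, ∀ t ∈ I, |g (x, t)| ≤ C) : (fun p ↦ W (g p)) ∈ polyGrowthC1 E I := by
  have hcomp {h : ℝ → ℝ} (hh : Continuous h) : (fun p ↦ h (g p)) ∈ polyGrowth E I := by
    obtain ⟨B, hB⟩ :=
      (isCompact_Icc (a := -C) (b := C)).exists_bound_of_continuousOn hh.continuousOn
    exact mem_polyGrowth_of_bounded (hh.comp hg.1.continuous).continuousOn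
      fun x t ht ↦ hB _ (abs_le.1 (hC x t ht))
  refine ⟨hW.comp hg.1, hcomp hW.continuous, fun v ↦ ?_⟩
  rw [show dirDeriv (v, 0) (fun p ↦ W (g p)) = (fun p ↦ deriv W (g p)) * dirDeriv (v, 0) g from
    funext fun p ↦ dirDeriv_comp (hW.differentiable one_ne_zero _)
      (hg.1.differentiable one_ne_zero p) _]
  exact mul_mem (hcomp hW.continuous_deriv_one) (hg.2.2 v)

/-- On the slab `E × I` the spatial derivatives of `g` of order at most `k` are bounded. -/
def HasBoundedSpaceDerivs (k : ℕ) (I : Set ℝ) (g : E × ℝ → ℝ) : Prop :=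
  ∃ C : ℝ, ∀ x, ∀ t ∈ I, ∀ i ≤ k, ‖iteratedFDeriv ℝ i (fun y ↦ g (y, t)) x‖ ≤ C

lemma hasBoundedSpaceDerivs_mono {k l : ℕ} (hkl : k ≤ l) (hg : HasBoundedSpaceDerivs l I g) :
    HasBoundedSpaceDerivs k I g :=
  hg.imp fun _ hC x t ht i hi ↦ hC x t ht i (hi.trans hkl)

lemma exists_abs_le_of_hasBoundedSpaceDerivs {k : ℕ} (hg : HasBoundedSpaceDerivs k I g) :
    ∃ C, ∀ x, ∀ t ∈ I, |g (x, t)| ≤ C :=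
  hg.imp fun _ hC x t ht ↦ by simpa using hC x t ht 0 k.zero_le

lemma hasBoundedSpaceDerivs_dirDeriv {k : ℕ} (hg : ContDiff ℝ (k + 1) g)
    (hk : HasBoundedSpaceDerivs (k + 1) I g) (v : E) :
    HasBoundedSpaceDerivs k I (dirDeriv (v, 0) g) := by
  obtain ⟨C, hC⟩ := hk
  refine ⟨‖v‖ * C, fun x t ht i hi ↦ ?_⟩
  have hslice : ContDiff ℝ (k + 1) fun y ↦ g (y, t) := hg.comp (by fun_prop)
  have hderiv : (fun y ↦ dirDeriv (v, 0) g (y, t)) = fun y ↦ fderiv ℝ (fun z ↦ g (z, t)) y v :=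
    funext fun y ↦ (fderiv_slice_apply (hg.differentiable (by simp) _) v).symm
  calc ‖iteratedFDeriv ℝ i (fun y ↦ dirDeriv (v, 0) g (y, t)) x‖
      ≤ ‖v‖ * ‖iteratedFDeriv ℝ i (fderiv ℝ fun z ↦ g (z, t)) x‖ := by
        rw [hderiv]
        exact norm_iteratedFDeriv_clm_apply_const
          (hslice.fderiv_right (m := k) le_rfl).contDiffAt (by exact_mod_cast hi)
    _ ≤ ‖v‖ * C := by
        rw [norm_iteratedFDeriv_fderiv]
        gcongr
        exact hC x t ht (i + 1) (by lia)

lemma mem_polyGrowthC1_of_hasBoundedSpaceDerivs (hg : ContDiff ℝ 1 g)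
    (hbd : HasBoundedSpaceDerivs 1 I g) : g ∈ polyGrowthC1 E I := by
  have hmem {h : E × ℝ → ℝ} (hh : Continuous h) {k : ℕ} (hk : HasBoundedSpaceDerivs k I h) :
      h ∈ polyGrowth E I :=
    (exists_abs_le_of_hasBoundedSpaceDerivs hk).elim fun _ hC ↦
      mem_polyGrowth_of_bounded hh.continuousOn hC
  refine ⟨hg, hmem hg.continuous hbd, fun v ↦ ?_⟩
  exact hmem (contDiff_dirDeriv (k := 0) (by simpa) _).continuous
    (hasBoundedSpaceDerivs_dirDeriv (k := 0) (by simpa) hbd v)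

end PolyGrowth

/-! ### Gaussian integrals of functions of polynomial growth -/

section GaussianIntegral

variable {E : Type*} [NormedAddCommGroup E] {m τ a b s t : ℝ} {x y : E} {I : Set ℝ}
  {g : E × ℝ → ℝ}

lemma one_add_norm_pow_le (y : E) (k : ℕ) {c : ℝ} (hc : 0 < c) (x : E) :
    (1 + ‖x‖) ^ k ≤ k.factorial * exp (1 + ‖y‖ + 1 / (4 * c)) * exp (c * dist x y ^ 2) := by
  have htri : ‖x‖ ≤ ‖y‖ + dist x y := by
    rw [dist_eq_norm, add_comm]
    exact norm_le_norm_sub_add x y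
  have hsq : dist x y ≤ 1 / (4 * c) + c * dist x y ^ 2 := by
    have : 0 ≤ c * (dist x y - 1 / (2 * c)) ^ 2 := by positivity
    have : c * (dist x y - 1 / (2 * c)) ^ 2 = c * dist x y ^ 2 - dist x y + 1 / (4 * c) := by
      field_simp
      ring
    linarith
  calc (1 + ‖x‖) ^ k ≤ exp (1 + ‖x‖) * k.factorial :=
        (div_le_iff₀ (by positivity)).1 (pow_div_factorial_le_exp _ (by positivity) k)
    _ ≤ exp (1 + ‖y‖ + 1 / (4 * c) + c * dist x y ^ 2) * k.factorial := by
        gcongr ?_ * _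
        exact exp_le_exp.2 (by linarith)
    _ = _ := by
        rw [exp_add]
        ring

lemma exists_abs_gaussianWeight_mul_le (hg : g ∈ polyGrowth E I) (m : ℝ) (y : E) (ha : 0 < a)
    (b : ℝ) : ∃ M, ∀ x, ∀ τ ∈ Set.Icc a b, ∀ t ∈ I,
      |gaussianWeight m y τ x * g (x, t)| ≤ M * gaussianWeight 0 y (2 * b) x := by
  obtain ⟨-, K, k, hK⟩ := hg
  have hpow : ContinuousOn (fun τ : ℝ ↦ τ ^ (-(m / 2))) (Set.Icc a b) := fun τ hτ ↦
    (continuousAt_rpow_const τ _ (.inl (ha.trans_le hτ.1).ne')).continuousWithinAt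
  obtain ⟨B, hB⟩ := isCompact_Icc.exists_bound_of_continuousOn hpow
  refine ⟨B * (|K| * (k.factorial * exp (1 + ‖y‖ + 1 / (4 * (1 / (8 * b)))))),
    fun x τ hτ t ht ↦ ?_⟩
  have hτ0 : 0 < τ := ha.trans_le hτ.1
  have hb : 0 < b := hτ0.trans_le hτ.2
  have hB0 : 0 ≤ B := (norm_nonneg _).trans (hB τ hτ)
  calc |gaussianWeight m y τ x * g (x, t)|
      = |τ ^ (-(m / 2))| * exp (-(dist x y ^ 2 / (4 * τ))) * |g (x, t)| := by
        rw [gaussianWeight, abs_mul, abs_mul, abs_exp]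
    _ ≤ B * exp (-(dist x y ^ 2 / (4 * b))) * (|K| * (k.factorial *
          exp (1 + ‖y‖ + 1 / (4 * (1 / (8 * b)))) * exp (1 / (8 * b) * dist x y ^ 2))) := by
        gcongr
        · exact hB τ hτ
        · exact hτ.2
        · refine (hK x t ht).trans (mul_le_mul (le_abs_self K) ?_ (by positivity) (abs_nonneg K))
          exact one_add_norm_pow_le y k (by positivity) x
    _ = B * (|K| * (k.factorial * exp (1 + ‖y‖ + 1 / (4 * (1 / (8 * b)))))) *
          exp (-(dist x y ^ 2 / (4 * b)) + 1 / (8 * b) * dist x y ^ 2) := by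
        rw [exp_add (-_)]
        ring
    _ = _ := by
        simp only [gaussianWeight, zero_div, neg_zero, Real.rpow_zero, one_mul]
        congr 2
        field_simp
        ring

variable [InnerProductSpace ℝ E]

lemma hasFDerivAt_gaussianWeight (m τ : ℝ) (y x : E) :
    HasFDerivAt (gaussianWeight m y τ)
      ((-(gaussianWeight m y τ x / (2 * τ))) • innerSL ℝ (x - y)) x := by
  have hsq : HasFDerivAt (fun z ↦ dist z y ^ 2) (2 • innerSL ℝ (x - y)) x := by
    simpa [dist_eq_norm] using ((hasFDerivAt_id x).sub_const y).norm_sq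
  have h := (((hsq.mul_const (4 * τ)⁻¹).neg).exp).const_mul (τ ^ (-(m / 2)))
  refine h.congr_fderiv ?_
  ext v
  simp [gaussianWeight, div_eq_mul_inv]
  ring

variable [FiniteDimensional ℝ E] [MeasurableSpace E] [BorelSpace E]

lemma integrable_gaussianWeight (m : ℝ) (y : E) (hτ : 0 < τ) :
    Integrable (gaussianWeight m y τ) := by
  have hcentred : Integrable fun x : E ↦ exp (-(‖x‖ ^ 2 / (4 * τ))) := by
    refine (GaussianFourier.integrable_cexp_neg_mul_sq_norm_add (V := E) (b := ((4 * τ)⁻¹ : ℝ))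
      (by simpa using hτ) 0 0).norm.congr (.of_forall fun x ↦ ?_)
    simp [Complex.norm_exp, ← Complex.ofReal_pow, ← Complex.ofReal_mul, div_eq_inv_mul]
  refine ((hcentred.comp_sub_right y).const_mul (τ ^ (-(m / 2)))).congr (.of_forall fun x ↦ ?_)
  simp [gaussianWeight, dist_eq_norm]

lemma integrable_gaussianWeight_mul (hg : g ∈ polyGrowth E I) (m : ℝ) (y : E) (hτ : 0 < τ)
    (ht : t ∈ I) : Integrable fun x ↦ gaussianWeight m y τ x * g (x, t) := by
  obtain ⟨M, hM⟩ := exists_abs_gaussianWeight_mul_le hg m y hτ τ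
  have hcont : Continuous fun x ↦ gaussianWeight m y τ x * g (x, t) :=
    (continuous_gaussianWeight m y τ).mul (continuous_slice_of_mem_polyGrowth hg ht)
  exact ((integrable_gaussianWeight 0 y (by positivity)).const_mul M).mono'
    hcont.aestronglyMeasurable
    (.of_forall fun x ↦ hM x τ (Set.right_mem_Icc.2 le_rfl) t ht)

lemma integral_gaussianWeight_mul_dirDeriv (hg : g ∈ polyGrowthC1 E I) (m : ℝ) (y : E)
    (hτ : 0 < τ) (ht : t ∈ I) (v : E) :
    ∫ x, gaussianWeight m y τ x * dirDeriv (v, 0) g (x, t) =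
      ∫ x, gaussianWeight m y τ x * (inner ℝ (x - y) v / (2 * τ) * g (x, t)) := by
  have hfderiv (x : E) : fderiv ℝ (gaussianWeight m y τ) x v * g (x, t) =
      -(gaussianWeight m y τ x * (inner ℝ (x - y) v / (2 * τ) * g (x, t))) := by
    rw [(hasFDerivAt_gaussianWeight m τ y x).fderiv]
    simp only [smul_apply, innerSL_apply_apply, smul_eq_mul]
    ring
  have hlin : (fun p ↦ inner ℝ (p.1 - y) v / (2 * τ) * g p) ∈ polyGrowthC1 E I := by
    refine mul_mem ?_ hg
    have h := sub_mem (clm_mem_polyGrowthC1 (I := I) ((2 * τ)⁻¹ • innerSL ℝ v))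
      (algebraMap_mem _ (inner ℝ y v / (2 * τ)))
    convert h using 2 with p
    simp [inner_sub_left, real_inner_comm, div_eq_inv_mul]
    ring
  have hslice : Differentiable ℝ fun x ↦ g (x, t) :=
    (hg.1.differentiable one_ne_zero).comp (by fun_prop)
  simp_rw [← fderiv_slice_apply (hg.1.differentiable one_ne_zero _)]
  rw [integral_mul_fderiv_eq_neg_fderiv_mul_of_integrable]
  · simp_rw [hfderiv, integral_neg, neg_neg]
  · simp_rw [hfderiv]
    exact (integrable_gaussianWeight_mul hlin.2.1 m y hτ ht).neg
  · simp_rw [fderiv_slice_apply (hg.1.differentiable one_ne_zero _)]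
    exact integrable_gaussianWeight_mul (hg.2.2 v) m y hτ ht
  · exact integrable_gaussianWeight_mul hg.2.1 m y hτ ht
  · exact fun x _ ↦ (hasFDerivAt_gaussianWeight m τ y x).differentiableAt
  · exact fun x _ ↦ hslice x

end GaussianIntegral

/-! ### Differentiating Gaussian integrals in time -/

section GaussianTime

lemma hasDerivAt_gaussianWeight {X : Type*} [PseudoMetricSpace X] (m : ℝ) (y x : X) {s t : ℝ}
    (hts : t < s) :
    HasDerivAt (fun r ↦ gaussianWeight m y (s - r) x)
      (gaussianWeight m y (s - t) x *
        (m / (2 * (s - t)) - dist x y ^ 2 / (4 * (s - t) ^ 2))) t := by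
  have hτ : s - t ≠ 0 := (sub_pos.2 hts).ne'
  have hsub : HasDerivAt (fun r ↦ s - r) (-1) t := by simpa using (hasDerivAt_id t).const_sub s
  have hpow := hsub.rpow_const (p := -(m / 2)) (.inl hτ)
  have hexp := (((hasDerivAt_const t (dist x y ^ 2)).fun_div (hsub.const_mul 4)
    (by simpa using hτ)).fun_neg).exp
  refine (hpow.mul hexp).congr_deriv ?_
  simp only [gaussianWeight, rpow_sub_one hτ]
  field_simp
  ring

/-- With `ρ (x, t) = gaussianWeight m y (s - t) x`, the quotient `∂ₜ(ρ g) / ρ`. -/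
noncomputable def weightedTimeDeriv {E : Type*} [NormedAddCommGroup E] [NormedSpace ℝ E]
    (m : ℝ) (y : E) (s : ℝ) (g : E × ℝ → ℝ) (p : E × ℝ) : ℝ :=
  dirDeriv (0, 1) g p + (m / (2 * (s - p.2)) - dist p.1 y ^ 2 / (4 * (s - p.2) ^ 2)) * g p

section Membership

variable {E : Type*} [NormedAddCommGroup E] {I : Set ℝ} {s : ℝ}

lemma time_mem_polyGrowth {h : ℝ → ℝ} (hI : IsCompact I) (hh : ContinuousOn h I) :
    (fun p ↦ h p.2) ∈ polyGrowth E I := by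
  obtain ⟨B, hB⟩ := hI.exists_bound_of_continuousOn hh
  exact mem_polyGrowth_of_bounded (hh.comp (by fun_prop) fun p hp ↦ hp.2) fun _ t ht ↦ hB t ht

lemma inv_sub_mem_polyGrowth (hI : IsCompact I) (hs : ∀ t ∈ I, t < s) :
    (fun p ↦ (s - p.2)⁻¹) ∈ polyGrowth E I :=
  time_mem_polyGrowth (h := fun t ↦ (s - t)⁻¹) hI
    (ContinuousOn.inv₀ (by fun_prop) fun t ht ↦ (sub_pos.2 (hs t ht)).ne')

lemma dist_mem_polyGrowth (y : E) : (fun p ↦ dist p.1 y) ∈ polyGrowth E I := by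
  refine ⟨by fun_prop, 1 + ‖y‖, 1, fun x t _ ↦ ?_⟩
  rw [abs_of_nonneg dist_nonneg, dist_eq_norm]
  linarith [norm_sub_le x y, mul_nonneg (norm_nonneg x) (norm_nonneg y)]

variable [NormedSpace ℝ E]

lemma weightedTimeDeriv_mem_polyGrowth {g : E × ℝ → ℝ} (hI : IsCompact I) (hs : ∀ t ∈ I, t < s)
    (hg : g ∈ polyGrowth E I) (hg' : dirDeriv (0, 1) g ∈ polyGrowth E I) (m : ℝ) (y : E) :
    weightedTimeDeriv m y s g ∈ polyGrowth E I := by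
  have hinv := inv_sub_mem_polyGrowth (E := E) hI hs
  have hrate := sub_mem (Subalgebra.smul_mem _ hinv (m / 2))
    (Subalgebra.smul_mem _ (pow_mem (mul_mem (dist_mem_polyGrowth y) hinv) 2) (1 / 4))
  convert add_mem hg' (mul_mem hrate hg) using 1
  funext p
  simp only [weightedTimeDeriv, Pi.add_apply, Pi.sub_apply, Pi.mul_apply, Pi.smul_apply,
    Pi.pow_apply, smul_eq_mul, div_eq_mul_inv, mul_inv, mul_pow, inv_pow]
  ring

end Membership

lemma hasDerivAt_gaussianWeight_mul {E : Type*} [NormedAddCommGroup E] [NormedSpace ℝ E]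
    {g : E × ℝ → ℝ} {s t : ℝ} (m : ℝ) (y x : E) (hg : ContDiff ℝ 1 g) (hts : t < s) :
    HasDerivAt (fun r ↦ gaussianWeight m y (s - r) x * g (x, r))
      (gaussianWeight m y (s - t) x * weightedTimeDeriv m y s g (x, t)) t := by
  refine ((hasDerivAt_gaussianWeight m y x hts).mul
    (hasDerivAt_time (hg.differentiable one_ne_zero (x, t)))).congr_deriv ?_
  simp only [weightedTimeDeriv]
  ring

variable {E : Type*} [NormedAddCommGroup E] [InnerProductSpace ℝ E] [FiniteDimensional ℝ E]
  [MeasurableSpace E] [BorelSpace E] {g : E × ℝ → ℝ} {a b s : ℝ}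

lemma exists_integrable_bound_gaussianWeight_mul (hg : g ∈ polyGrowth E (Set.Icc a b)) (m : ℝ)
    (y : E) (hab : a ≤ b) (hs : b < s) :
    ∃ B : E → ℝ, Integrable B ∧
      ∀ x, ∀ t ∈ Set.Icc a b, ‖gaussianWeight m y (s - t) x * g (x, t)‖ ≤ B x := by
  obtain ⟨M, hM⟩ := exists_abs_gaussianWeight_mul_le hg m y (sub_pos.2 hs) (s - a)
  exact ⟨_, (integrable_gaussianWeight 0 y (by linarith)).const_mul M,
    fun x t ht ↦ hM x _ ⟨by linarith [ht.2], by linarith [ht.1]⟩ t ht⟩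

lemma continuousOn_integral_gaussianWeight_mul (hg : g ∈ polyGrowth E (Set.Icc a b)) (m : ℝ)
    (y : E) (hs : b < s) :
    ContinuousOn (fun t ↦ ∫ x, gaussianWeight m y (s - t) x * g (x, t)) (Set.Icc a b) := by
  intro t₀ ht₀
  have hts {t : ℝ} (ht : t ∈ Set.Icc a b) : t < s := ht.2.trans_lt hs
  obtain ⟨B, hB, hle⟩ :=
    exists_integrable_bound_gaussianWeight_mul hg m y (ht₀.1.trans ht₀.2) hs
  refine continuousOn_of_dominated (fun t ht ↦
    (integrable_gaussianWeight_mul hg m y (sub_pos.2 (hts ht)) ht).aestronglyMeasurable)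
    (fun t ht ↦ .of_forall fun x ↦ hle x t ht) hB (.of_forall fun x t ht ↦ ?_) t₀ ht₀
  have hgx : ContinuousOn (fun t ↦ g (x, t)) (Set.Icc a b) :=
    hg.1.comp (by fun_prop) fun t ht ↦ ⟨Set.mem_univ x, ht⟩
  exact (hasDerivAt_gaussianWeight m y x (hts ht)).continuousAt.continuousWithinAt.mul (hgx t ht)

lemma hasDerivAt_integral_gaussianWeight_mul (hg : ContDiff ℝ 1 g)
    (hgI : g ∈ polyGrowth E (Set.Icc a b)) (hg' : dirDeriv (0, 1) g ∈ polyGrowth E (Set.Icc a b))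
    (m : ℝ) (y : E) (hs : b < s) {t : ℝ} (ht : t ∈ Set.Ioo a b) :
    HasDerivAt (fun r ↦ ∫ x, gaussianWeight m y (s - r) x * g (x, r))
      (∫ x, gaussianWeight m y (s - t) x * weightedTimeDeriv m y s g (x, t)) t := by
  have hts {r : ℝ} (hr : r ∈ Set.Ioo a b) : r < s := hr.2.trans hs
  have hIcc {r : ℝ} (hr : r ∈ Set.Ioo a b) : r ∈ Set.Icc a b := Set.Ioo_subset_Icc_self hr
  have hgt := weightedTimeDeriv_mem_polyGrowth isCompact_Icc
    (fun r hr ↦ hr.2.trans_lt hs) hgI hg' m y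
  have hint {h : E × ℝ → ℝ} (hh : h ∈ polyGrowth E (Set.Icc a b)) {r : ℝ}
      (hr : r ∈ Set.Ioo a b) : Integrable fun x ↦ gaussianWeight m y (s - r) x * h (x, r) :=
    integrable_gaussianWeight_mul hh m y (sub_pos.2 (hts hr)) (hIcc hr)
  obtain ⟨B, hB, hle⟩ :=
    exists_integrable_bound_gaussianWeight_mul hgt m y (ht.1.trans ht.2).le hs
  refine (hasDerivAt_integral_of_dominated_loc_of_deriv_le (Ioo_mem_nhds ht.1 ht.2)
    (F' := fun r x ↦ gaussianWeight m y (s - r) x * weightedTimeDeriv m y s g (x, r))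
    ?_ (hint hgI ht) (hint hgt ht).aestronglyMeasurable
    (.of_forall fun x r hr ↦ hle x r (hIcc hr)) hB
    (.of_forall fun x r hr ↦ hasDerivAt_gaussianWeight_mul m y x hg (hts hr))).2
  filter_upwards [Ioo_mem_nhds ht.1 ht.2] with r hr
  exact (hint hgI hr).aestronglyMeasurable

theorem antitoneOn_integral_gaussianWeight_mul {m : ℝ} {y : E} (hg : ContDiff ℝ 1 g)
    (hgI : g ∈ polyGrowth E (Set.Icc a b)) (hg' : dirDeriv (0, 1) g ∈ polyGrowth E (Set.Icc a b))
    (hs : b < s)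
    (hneg : ∀ t ∈ Set.Ioo a b,
      ∫ x, gaussianWeight m y (s - t) x * weightedTimeDeriv m y s g (x, t) ≤ 0) :
    AntitoneOn (fun t ↦ ∫ x, gaussianWeight m y (s - t) x * g (x, t)) (Set.Icc a b) := by
  have hderiv {t : ℝ} (ht : t ∈ Set.Ioo a b) :=
    hasDerivAt_integral_gaussianWeight_mul hg hgI hg' m y hs ht
  refine antitoneOn_of_deriv_nonpos (convex_Icc a b)
    (continuousOn_integral_gaussianWeight_mul hgI m y hs) ?_ ?_ <;> rw [interior_Icc]
  · exact fun t ht ↦ (hderiv ht).differentiableAt.differentiableWithinAt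
  · exact fun t ht ↦ (hderiv ht).deriv ▸ hneg t ht

end GaussianTime

/-! ### Energy and its fluxes -/

section Energy

variable {n : ℕ} {W : ℝ → ℝ} {ε s : ℝ} {y : EuclideanSpace ℝ (Fin n)}
  {U : EuclideanSpace ℝ (Fin n) × ℝ → ℝ} {p : EuclideanSpace ℝ (Fin n) × ℝ}

local notation:max "∂[" i "]" => dirDeriv (EuclideanSpace.single i (1 : ℝ), (0 : ℝ))

local notation "∂ₜ" => dirDeriv (0, 1)

/-- The Allen–Cahn equation `∂ₜU = ΔU - W'(U) / ε²` at a point of space-time. -/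
def SolvesAllenCahnAt (W : ℝ → ℝ) (ε : ℝ) (U : EuclideanSpace ℝ (Fin n) × ℝ → ℝ)
    (p : EuclideanSpace ℝ (Fin n) × ℝ) : Prop :=
  ∂ₜ U p = ∑ i, ∂[i] (∂[i] U) p - (1 / ε ^ 2) * deriv W (U p)

/-- The Allen–Cahn energy density `ε |∇U|² / 2 + W(U) / ε` of the potential `W`. -/
noncomputable def energyDensity (W : ℝ → ℝ) (ε : ℝ) (U : EuclideanSpace ℝ (Fin n) × ℝ → ℝ)
    (p : EuclideanSpace ℝ (Fin n) × ℝ) : ℝ :=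
  (ε / 2) * ∑ i, ∂[i] U p ^ 2 + (1 / ε) * W (U p)

/-- The flux `ε ∂ₜU ∇U` through which the energy is transported in time. -/
noncomputable def energyFlux (ε : ℝ) (U : EuclideanSpace ℝ (Fin n) × ℝ → ℝ) (i : Fin n)
    (p : EuclideanSpace ℝ (Fin n) × ℝ) : ℝ :=
  ε * (∂ₜ U p * ∂[i] U p)

/-- The derivative `(x - y) · ∇U` of `U` along dilations centred at `y`. -/
noncomputable def radialDeriv (y : EuclideanSpace ℝ (Fin n))
    (U : EuclideanSpace ℝ (Fin n) × ℝ → ℝ) (p : EuclideanSpace ℝ (Fin n) × ℝ) : ℝ :=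
  ∑ i, (p.1 i - y i) * ∂[i] U p

/-- The stress-energy tensor `e I - ε ∇U ⊗ ∇U` applied to the dilation field `x - y`, where `e` is
the energy density. -/
noncomputable def stressFlux (W : ℝ → ℝ) (ε : ℝ) (y : EuclideanSpace ℝ (Fin n))
    (U : EuclideanSpace ℝ (Fin n) × ℝ → ℝ) (i : Fin n) (p : EuclideanSpace ℝ (Fin n) × ℝ) : ℝ :=
  (p.1 i - y i) * energyDensity W ε U p - ε * (radialDeriv y U p * ∂[i] U p)

lemma contDiff_energyDensity (hW : ContDiff ℝ 1 W) (ε : ℝ) (hU : ContDiff ℝ 2 U) :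
    ContDiff ℝ 1 (energyDensity W ε U) := by
  have hderiv (i : Fin n) : ContDiff ℝ 1 (∂[i] U) := contDiff_dirDeriv (by simpa) _
  have hU1 : ContDiff ℝ 1 U := hU.of_le one_le_two
  unfold energyDensity
  fun_prop

lemma contDiff_radialDeriv (y : EuclideanSpace ℝ (Fin n)) (hU : ContDiff ℝ 2 U) :
    ContDiff ℝ 1 (radialDeriv y U) := by
  have hderiv (i : Fin n) : ContDiff ℝ 1 (∂[i] U) := contDiff_dirDeriv (by simpa) _
  unfold radialDeriv
  fun_prop

lemma dirDeriv_sub_coord (i j : Fin n) :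
    ∂[i] (fun q ↦ q.1 j - y j) p = if i = j then 1 else 0 := by
  have h : HasFDerivAt (fun q : EuclideanSpace ℝ (Fin n) × ℝ ↦ q.1 j - y j)
      ((EuclideanSpace.proj j).comp (.fst ℝ _ ℝ)) p :=
    (((EuclideanSpace.proj j).comp (.fst ℝ _ ℝ)).hasFDerivAt (x := p)).sub_const (y j)
  simp [dirDeriv, h.fderiv, eq_comm]

lemma dirDeriv_energyDensity (hW : Differentiable ℝ W) (hU : ContDiff ℝ 2 U)
    (v : EuclideanSpace ℝ (Fin n) × ℝ) :
    dirDeriv v (energyDensity W ε U) p =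
      ε * ∑ i, ∂[i] U p * ∂[i] (dirDeriv v U) p +
        (1 / ε) * (deriv W (U p) * dirDeriv v U p) := by
  have hderiv (i : Fin n) : DifferentiableAt ℝ (∂[i] U) p :=
    (contDiff_dirDeriv (k := 1) (by simpa) _).differentiable one_ne_zero p
  have hU1 : DifferentiableAt ℝ U p := hU.differentiable two_ne_zero p
  have hsq (i : Fin n) : dirDeriv v (fun q ↦ ∂[i] U q ^ 2) p =
      2 * (∂[i] U p * ∂[i] (dirDeriv v U) p) := by
    simp only [pow_two]
    rw [dirDeriv_mul (hderiv i) (hderiv i), dirDeriv_comm hU v]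
    ring
  unfold energyDensity
  rw [dirDeriv_add (by fun_prop) (by fun_prop), dirDeriv_const_mul (by fun_prop),
    dirDeriv_const_mul (by fun_prop),
    dirDeriv_sum (G := fun i q ↦ ∂[i] U q ^ 2) fun i _ ↦ (hderiv i).pow 2, dirDeriv_comp (hW _) hU1]
  simp_rw [hsq, ← Finset.mul_sum]
  ring

lemma sum_dirDeriv_energyFlux (hε : ε ≠ 0) (hW : Differentiable ℝ W) (hU : ContDiff ℝ 2 U)
    (hpde : SolvesAllenCahnAt W ε U p) :
    ∑ i, ∂[i] (energyFlux ε U i) p =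
      ∂ₜ (energyDensity W ε U) p + ε * ∂ₜ U p ^ 2 := by
  have hdiff (v : EuclideanSpace ℝ (Fin n) × ℝ) : DifferentiableAt ℝ (dirDeriv v U) p :=
    (contDiff_dirDeriv (k := 1) (by simpa) v).differentiable one_ne_zero p
  have hpartial (i : Fin n) : ∂[i] (energyFlux ε U i) p =
      ε * (∂ₜ U p * ∂[i] (∂[i] U) p) +
        ε * (∂[i] U p * ∂[i] (∂ₜ U) p) := by
    have := hdiff (0, 1)
    have := hdiff (EuclideanSpace.single i 1, 0)
    unfold energyFlux
    rw [dirDeriv_const_mul (by fun_prop), dirDeriv_mul (by fun_prop) (by fun_prop)]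
    ring
  have hlaplacian : ∑ i, ∂[i] (∂[i] U) p =
      ∂ₜ U p + (1 / ε ^ 2) * deriv W (U p) := by
    rw [hpde]
    ring
  simp_rw [hpartial, Finset.sum_add_distrib, ← Finset.mul_sum]
  rw [hlaplacian, dirDeriv_energyDensity hW hU]
  field_simp
  ring

lemma dirDeriv_radialDeriv (hU : ContDiff ℝ 2 U) (i : Fin n) :
    ∂[i] (radialDeriv y U) p =
      ∂[i] U p + ∑ j, (p.1 j - y j) * ∂[j] (∂[i] U) p := by
  have hderiv (j : Fin n) : DifferentiableAt ℝ (∂[j] U) p :=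
    (contDiff_dirDeriv (k := 1) (by simpa) _).differentiable one_ne_zero p
  unfold radialDeriv
  rw [dirDeriv_sum fun j _ ↦ by have := hderiv j; fun_prop]
  have hterm (j : Fin n) : ∂[i] (fun q ↦ (q.1 j - y j) * ∂[j] U q) p =
      (if i = j then ∂[j] U p else 0) +
        (p.1 j - y j) * ∂[j] (∂[i] U) p := by
    rw [dirDeriv_mul (by fun_prop) (hderiv j), dirDeriv_sub_coord, dirDeriv_comm hU]
    split_ifs <;> ring
  simp_rw [hterm, Finset.sum_add_distrib, Finset.sum_ite_eq, Finset.mem_univ, if_true]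

lemma sum_dirDeriv_stressFlux (hε : ε ≠ 0) (hW : ContDiff ℝ 1 W) (hU : ContDiff ℝ 2 U)
    (hpde : SolvesAllenCahnAt W ε U p) :
    ∑ i, ∂[i] (stressFlux W ε y U i) p =
      n * energyDensity W ε U p - ε * ∑ i, ∂[i] U p ^ 2 -
        ε * (∂ₜ U p * radialDeriv y U p) := by
  have he := (contDiff_energyDensity hW ε hU).differentiable one_ne_zero p
  have hrad := (contDiff_radialDeriv y hU).differentiable one_ne_zero p
  have hpartial (i : Fin n) : ∂[i] (stressFlux W ε y U i) p =
      energyDensity W ε U p - ε * ∂[i] U p ^ 2 -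
        ε * (radialDeriv y U p * ∂[i] (∂[i] U) p) +
        (1 / ε) * (deriv W (U p) * ((p.1 i - y i) * ∂[i] U p)) +
        ε * ((p.1 i - y i) * ∑ j, ∂[j] U p * ∂[j] (∂[i] U) p -
          ∂[i] U p * ∑ j, (p.1 j - y j) * ∂[j] (∂[i] U) p) := by
    have hderiv : DifferentiableAt ℝ (∂[i] U) p :=
      (contDiff_dirDeriv (k := 1) (by simpa) _).differentiable one_ne_zero p
    unfold stressFlux
    rw [dirDeriv_sub (by fun_prop) (by fun_prop), dirDeriv_const_mul (by fun_prop),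
      dirDeriv_mul (by fun_prop) he, dirDeriv_mul hrad hderiv, dirDeriv_sub_coord, if_pos rfl,
      dirDeriv_radialDeriv hU, dirDeriv_energyDensity (hW.differentiable one_ne_zero) hU]
    ring
  have hsymm : ∑ i, (p.1 i - y i) * ∑ j, ∂[j] U p * ∂[j] (∂[i] U) p =
      ∑ i, ∂[i] U p * ∑ j, (p.1 j - y j) * ∂[j] (∂[i] U) p := by
    simp_rw [Finset.mul_sum]
    rw [Finset.sum_comm]
    refine Finset.sum_congr rfl fun i _ ↦ Finset.sum_congr rfl fun j _ ↦ ?_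
    rw [dirDeriv_comm hU]
    ring
  have hlaplacian : ∑ i, ∂[i] (∂[i] U) p =
      ∂ₜ U p + (1 / ε ^ 2) * deriv W (U p) := by
    rw [hpde]
    ring
  simp_rw [hpartial, Finset.sum_add_distrib, Finset.sum_sub_distrib, ← Finset.mul_sum,
    Finset.sum_sub_distrib]
  rw [hsymm, hlaplacian, ← radialDeriv]
  simp only [Finset.sum_const, Finset.card_univ, Fintype.card_fin, nsmul_eq_mul]
  field_simp
  ring

/-- With `ρ (x, t) = gaussianWeight m y (s - t) x`, the quotient `div(ρ F) / ρ`, which does not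
depend on `m`. -/
noncomputable def weightedDivergence (y : EuclideanSpace ℝ (Fin n)) (s : ℝ)
    (F : Fin n → EuclideanSpace ℝ (Fin n) × ℝ → ℝ) (p : EuclideanSpace ℝ (Fin n) × ℝ) : ℝ :=
  ∑ i, (∂[i] (F i) p - (p.1 i - y i) / (2 * (s - p.2)) * F i p)

lemma weightedDivergence_eq (F : Fin n → EuclideanSpace ℝ (Fin n) × ℝ → ℝ) :
    weightedDivergence y s F p =
      ∑ i, ∂[i] (F i) p - (∑ i, (p.1 i - y i) * F i p) / (2 * (s - p.2)) := by
  simp_rw [weightedDivergence, Finset.sum_sub_distrib, Finset.sum_div, div_mul_eq_mul_div]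

/-- Ilmanen's monotonicity formula before integration. -/
theorem weightedDivergence_energyFlux_add_stressFlux (hε : ε ≠ 0) (hW : ContDiff ℝ 1 W)
    (hU : ContDiff ℝ 2 U) (hpde : SolvesAllenCahnAt W ε U p) (hp : p.2 < s) :
    weightedDivergence y s (energyFlux ε U) p +
        1 / (2 * (s - p.2)) * weightedDivergence y s (stressFlux W ε y U) p =
      weightedTimeDeriv (n - 1) y s (energyDensity W ε U) p +
        ε * (∂ₜ U p - radialDeriv y U p / (2 * (s - p.2))) ^ 2 +
        1 / (2 * (s - p.2)) * ((1 / ε) * W (U p) - (ε / 2) * ∑ i, ∂[i] U p ^ 2) := by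
  have hτ : s - p.2 ≠ 0 := (sub_pos.2 hp).ne'
  have hdist : dist p.1 y ^ 2 = ∑ i, (p.1 i - y i) ^ 2 := by
    rw [EuclideanSpace.dist_eq, sq_sqrt (by positivity)]
    simp [Real.dist_eq]
  have hflux : ∑ i, (p.1 i - y i) * energyFlux ε U i p =
      ε * ∂ₜ U p * radialDeriv y U p := by
    simp_rw [radialDeriv, Finset.mul_sum, energyFlux]
    exact Finset.sum_congr rfl fun i _ ↦ by ring
  have hstress : ∑ i, (p.1 i - y i) * stressFlux W ε y U i p =
      dist p.1 y ^ 2 * energyDensity W ε U p - ε * radialDeriv y U p ^ 2 := by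
    have hterm (i : Fin n) : (p.1 i - y i) * stressFlux W ε y U i p =
        (p.1 i - y i) ^ 2 * energyDensity W ε U p -
          ε * radialDeriv y U p * ((p.1 i - y i) * ∂[i] U p) := by
      rw [stressFlux]
      ring
    simp_rw [hterm, Finset.sum_sub_distrib, ← Finset.sum_mul, ← Finset.mul_sum, ← hdist]
    rw [← radialDeriv]
    ring
  rw [weightedDivergence_eq, weightedDivergence_eq, hflux, hstress,
    sum_dirDeriv_energyFlux hε (hW.differentiable one_ne_zero) hU hpde,
    sum_dirDeriv_stressFlux hε hW hU hpde, weightedTimeDeriv]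
  have hdiscrepancy : (1 / ε) * W (U p) - (ε / 2) * ∑ i, ∂[i] U p ^ 2 =
      energyDensity W ε U p - ε * ∑ i, ∂[i] U p ^ 2 := by
    rw [energyDensity]
    ring
  rw [hdiscrepancy]
  field_simp
  ring

/-! ### The monotonicity formula -/

lemma sub_coord_mem_polyGrowthC1 {I : Set ℝ} (y : EuclideanSpace ℝ (Fin n)) (i : Fin n) :
    (fun p ↦ p.1 i - y i) ∈ polyGrowthC1 (EuclideanSpace ℝ (Fin n)) I :=
  sub_mem (clm_mem_polyGrowthC1 (EuclideanSpace.proj i)) (algebraMap_mem _ (y i))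

lemma weightedDivergence_mem_polyGrowth {I : Set ℝ} (hI : IsCompact I) (hs : ∀ t ∈ I, t < s)
    {F : Fin n → EuclideanSpace ℝ (Fin n) × ℝ → ℝ} (hF : ∀ i, F i ∈ polyGrowthC1 _ I)
    (y : EuclideanSpace ℝ (Fin n)) : weightedDivergence y s F ∈ polyGrowth _ I := by
  have hinv := inv_sub_mem_polyGrowth (E := EuclideanSpace ℝ (Fin n)) hI hs
  convert sum_mem fun (i : Fin n) (_ : i ∈ Finset.univ) ↦ sub_mem ((hF i).2.2 (.single i 1))
    (mul_mem (mul_mem (sub_coord_mem_polyGrowthC1 y i).2.1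
      (Subalgebra.smul_mem _ hinv (1 / 2))) (hF i).2.1) using 1
  funext p
  simp only [weightedDivergence, Finset.sum_apply, Pi.sub_apply, Pi.mul_apply, Pi.smul_apply,
    smul_eq_mul, div_eq_mul_inv, mul_inv, one_mul]

lemma integral_gaussianWeight_mul_weightedDivergence {I : Set ℝ}
    {F : Fin n → EuclideanSpace ℝ (Fin n) × ℝ → ℝ} (hF : ∀ i, F i ∈ polyGrowthC1 _ I) (m : ℝ)
    (y : EuclideanSpace ℝ (Fin n)) {t : ℝ} (ht : t ∈ I) (hts : t < s) :
    ∫ x, gaussianWeight m y (s - t) x * weightedDivergence y s F (x, t) = 0 := by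
  have hτ : 0 < s - t := sub_pos.2 hts
  have hderiv (i : Fin n) :
      Integrable fun x ↦ gaussianWeight m y (s - t) x * ∂[i] (F i) (x, t) :=
    integrable_gaussianWeight_mul ((hF i).2.2 _) m y hτ ht
  have hlin (i : Fin n) : Integrable fun x ↦
      gaussianWeight m y (s - t) x * ((x i - y i) / (2 * (s - t)) * F i (x, t)) := by
    convert integrable_gaussianWeight_mul (Subalgebra.smul_mem _
      (mul_mem (sub_coord_mem_polyGrowthC1 y i).2.1 (hF i).2.1) (2 * (s - t))⁻¹) m y hτ ht using 3
    simp only [Pi.smul_apply, Pi.mul_apply, smul_eq_mul]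
    ring
  have hparts (i : Fin n) : ∫ x, gaussianWeight m y (s - t) x * ∂[i] (F i) (x, t) =
      ∫ x, gaussianWeight m y (s - t) x * ((x i - y i) / (2 * (s - t)) * F i (x, t)) := by
    simpa [EuclideanSpace.inner_single_right] using
      integral_gaussianWeight_mul_dirDeriv (hF i) m y hτ ht (.single i 1)
  have hterm (i : Fin n) : ∫ x, gaussianWeight m y (s - t) x *
      (∂[i] (F i) (x, t) - (x i - y i) / (2 * (s - t)) * F i (x, t)) = 0 := by
    simp_rw [mul_sub (gaussianWeight m y (s - t) _)]
    rw [integral_sub (hderiv i) (hlin i), hparts, sub_self]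
  simp_rw [weightedDivergence, Finset.mul_sum]
  rw [integral_finsetSum _ fun i _ ↦ ?_, Finset.sum_eq_zero fun i _ ↦ hterm i]
  simpa only [Pi.sub_def, ← mul_sub (gaussianWeight m y (s - t) _)] using (hderiv i).sub (hlin i)

/-- A `C³` function on space-time that solves the Allen–Cahn equation for the potential `W` at all
times in `I`, with spatial derivatives up to order three bounded on `ℝⁿ × I`. -/
structure IsAllenCahnFlow (W : ℝ → ℝ) (ε : ℝ) (I : Set ℝ)
    (U : EuclideanSpace ℝ (Fin n) × ℝ → ℝ) : Prop where
  contDiff : ContDiff ℝ 3 U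
  bounded : HasBoundedSpaceDerivs 3 I U
  solves : ∀ x, ∀ t ∈ I, SolvesAllenCahnAt W ε U (x, t)

namespace IsAllenCahnFlow

variable {I : Set ℝ}

lemma contDiff_two (hU : IsAllenCahnFlow W ε I U) : ContDiff ℝ 2 U :=
  hU.contDiff.of_le (by norm_num)

lemma comp_mem_polyGrowthC1 (hU : IsAllenCahnFlow W ε I U) {h : ℝ → ℝ} (hh : ContDiff ℝ 1 h) :
    (fun p ↦ h (U p)) ∈ polyGrowthC1 _ I :=
  (exists_abs_le_of_hasBoundedSpaceDerivs hU.bounded).elim fun _ hC ↦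
    AllenCahn.comp_mem_polyGrowthC1 hh (mem_polyGrowthC1_of_hasBoundedSpaceDerivs
      (hU.contDiff.of_le (by norm_num)) (hasBoundedSpaceDerivs_mono (by norm_num) hU.bounded)) hC

lemma dirDeriv_mem_polyGrowthC1 (hU : IsAllenCahnFlow W ε I U) (i : Fin n) :
    ∂[i] U ∈ polyGrowthC1 _ I :=
  mem_polyGrowthC1_of_hasBoundedSpaceDerivs (contDiff_dirDeriv (hU.contDiff.of_le (by norm_num)) _)
    (hasBoundedSpaceDerivs_dirDeriv (hU.contDiff.of_le (by norm_num))
      (hasBoundedSpaceDerivs_mono (by norm_num) hU.bounded) _)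

lemma dirDeriv_dirDeriv_mem_polyGrowthC1 (hU : IsAllenCahnFlow W ε I U) (i : Fin n) :
    ∂[i] (∂[i] U) ∈ polyGrowthC1 _ I := by
  have hderiv : ContDiff ℝ (1 + 1) (∂[i] U) :=
    contDiff_dirDeriv (hU.contDiff.of_le (by norm_num)) _
  exact mem_polyGrowthC1_of_hasBoundedSpaceDerivs (contDiff_dirDeriv hderiv _)
    (hasBoundedSpaceDerivs_dirDeriv (by simpa) (hasBoundedSpaceDerivs_dirDeriv
      (hU.contDiff.of_le (by norm_num)) hU.bounded _) _)

-- The equation turns the bounds on the spatial derivatives into one on `∂ₜU`.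
lemma timeDeriv_mem_polyGrowthC1 (hU : IsAllenCahnFlow W ε I U) (hW : ContDiff ℝ 2 W) :
    ∂ₜ U ∈ polyGrowthC1 _ I := by
  refine polyGrowthC1_congr (sub_mem (sum_mem fun i (_ : i ∈ Finset.univ) ↦
    hU.dirDeriv_dirDeriv_mem_polyGrowthC1 i) (Subalgebra.smul_mem _
      (hU.comp_mem_polyGrowthC1 (h := deriv W) hW.deriv') (1 / ε ^ 2)))
    (contDiff_dirDeriv (hU.contDiff.of_le (by norm_num)) _) fun x t ht ↦ ?_
  simpa using (hU.solves x t ht).symm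

lemma energyDensity_mem_polyGrowthC1 (hU : IsAllenCahnFlow W ε I U) (hW : ContDiff ℝ 1 W) :
    energyDensity W ε U ∈ polyGrowthC1 _ I := by
  convert add_mem (Subalgebra.smul_mem _ (sum_mem fun i (_ : i ∈ Finset.univ) ↦
    pow_mem (hU.dirDeriv_mem_polyGrowthC1 i) 2) (ε / 2))
    (Subalgebra.smul_mem _ (hU.comp_mem_polyGrowthC1 hW) (1 / ε)) using 1
  funext p
  simp [energyDensity]

lemma energyFlux_mem_polyGrowthC1 (hU : IsAllenCahnFlow W ε I U) (hW : ContDiff ℝ 2 W)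
    (i : Fin n) : energyFlux ε U i ∈ polyGrowthC1 _ I :=
  Subalgebra.smul_mem _
    (mul_mem (hU.timeDeriv_mem_polyGrowthC1 hW) (hU.dirDeriv_mem_polyGrowthC1 i)) ε

lemma radialDeriv_mem_polyGrowthC1 (hU : IsAllenCahnFlow W ε I U)
    (y : EuclideanSpace ℝ (Fin n)) : radialDeriv y U ∈ polyGrowthC1 _ I := by
  convert sum_mem fun i (_ : i ∈ Finset.univ) ↦
    mul_mem (sub_coord_mem_polyGrowthC1 y i) (hU.dirDeriv_mem_polyGrowthC1 i) using 1
  funext p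
  simp [radialDeriv]

lemma stressFlux_mem_polyGrowthC1 (hU : IsAllenCahnFlow W ε I U) (hW : ContDiff ℝ 1 W)
    (y : EuclideanSpace ℝ (Fin n)) (i : Fin n) : stressFlux W ε y U i ∈ polyGrowthC1 _ I :=
  sub_mem (mul_mem (sub_coord_mem_polyGrowthC1 y i) (hU.energyDensity_mem_polyGrowthC1 hW))
    (Subalgebra.smul_mem _
      (mul_mem (hU.radialDeriv_mem_polyGrowthC1 y) (hU.dirDeriv_mem_polyGrowthC1 i)) ε)

lemma timeDeriv_energyDensity_mem_polyGrowth (hU : IsAllenCahnFlow W ε I U) (hε : ε ≠ 0)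
    (hW : ContDiff ℝ 2 W) : ∂ₜ (energyDensity W ε U) ∈ polyGrowth _ I := by
  refine polyGrowth_congr (sub_mem (sum_mem fun i (_ : i ∈ Finset.univ) ↦
    (hU.energyFlux_mem_polyGrowthC1 hW i).2.2 (.single i 1)) (Subalgebra.smul_mem _
      (pow_mem (hU.timeDeriv_mem_polyGrowthC1 hW).2.1 2) ε)) fun x t ht ↦ ?_
  have h := sum_dirDeriv_energyFlux hε (hW.differentiable two_ne_zero) hU.contDiff_two
    (hU.solves x t ht)
  simpa [sub_eq_iff_eq_add] using h

theorem integral_gaussianWeight_mul_weightedTimeDeriv_nonpos {a b : ℝ}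
    (hU : IsAllenCahnFlow W ε (Set.Icc a b) U) (hε : 0 < ε) (hW : ContDiff ℝ 2 W)
    (hdisc : ∀ x, ∀ t ∈ Set.Icc a b,
      (ε / 2) * ∑ i, ∂[i] U (x, t) ^ 2 ≤ (1 / ε) * W (U (x, t)))
    (y : EuclideanSpace ℝ (Fin n)) (hs : b < s) {t : ℝ} (ht : t ∈ Set.Icc a b) :
    ∫ x, gaussianWeight (n - 1) y (s - t) x *
      weightedTimeDeriv (n - 1) y s (energyDensity W ε U) (x, t) ≤ 0 := by
  have hlt : ∀ r ∈ Set.Icc a b, r < s := fun r hr ↦ hr.2.trans_lt hs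
  have hτ : 0 < s - t := sub_pos.2 (hlt t ht)
  have hW1 : ContDiff ℝ 1 W := hW.of_le one_le_two
  have hP := hU.energyFlux_mem_polyGrowthC1 hW
  have hS := hU.stressFlux_mem_polyGrowthC1 hW1 y
  have hPS := add_mem (weightedDivergence_mem_polyGrowth isCompact_Icc hlt hP y)
    (Subalgebra.smul_mem _ (weightedDivergence_mem_polyGrowth isCompact_Icc hlt hS y)
      (1 / (2 * (s - t))))
  have hint {g : EuclideanSpace ℝ (Fin n) × ℝ → ℝ} (hg : g ∈ polyGrowth _ (Set.Icc a b)) :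
      Integrable fun x ↦ gaussianWeight (n - 1) y (s - t) x * g (x, t) :=
    integrable_gaussianWeight_mul hg _ y hτ ht
  calc ∫ x, gaussianWeight (n - 1) y (s - t) x *
        weightedTimeDeriv (n - 1) y s (energyDensity W ε U) (x, t)
      ≤ ∫ x, gaussianWeight (n - 1) y (s - t) x * (weightedDivergence y s (energyFlux ε U) (x, t) +
          1 / (2 * (s - t)) * weightedDivergence y s (stressFlux W ε y U) (x, t)) := by
        refine integral_mono (hint (weightedTimeDeriv_mem_polyGrowth isCompact_Icc hlt
          (hU.energyDensity_mem_polyGrowthC1 hW1).2.1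
          (hU.timeDeriv_energyDensity_mem_polyGrowth hε.ne' hW) _ y)) (hint hPS) fun x ↦ ?_
        have hdiscx : 0 ≤ 1 / ε * W (U (x, t)) - ε / 2 * ∑ i, ∂[i] U (x, t) ^ 2 :=
          sub_nonneg.2 (hdisc x t ht)
        refine mul_le_mul_of_nonneg_left ?_ (gaussianWeight_pos hτ).le
        rw [weightedDivergence_energyFlux_add_stressFlux hε.ne' hW1 hU.contDiff_two
          (hU.solves x t ht) (hlt t ht), add_assoc]
        exact le_add_of_nonneg_right (by positivity)
    _ = 0 := by
        simp_rw [mul_add, mul_left_comm _ (1 / (2 * (s - t)))]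
        rw [integral_add (hint (weightedDivergence_mem_polyGrowth isCompact_Icc hlt hP y))
          ((hint (weightedDivergence_mem_polyGrowth isCompact_Icc hlt hS y)).const_mul _),
          integral_const_mul, integral_gaussianWeight_mul_weightedDivergence hP _ y ht (hlt t ht),
          integral_gaussianWeight_mul_weightedDivergence hS _ y ht (hlt t ht), mul_zero, add_zero]

theorem antitoneOn_integral_gaussianWeight_mul_energyDensity {a b : ℝ}
    (hU : IsAllenCahnFlow W ε (Set.Icc a b) U) (hε : 0 < ε) (hW : ContDiff ℝ 2 W)
    (hdisc : ∀ x, ∀ t ∈ Set.Icc a b,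
      (ε / 2) * ∑ i, ∂[i] U (x, t) ^ 2 ≤ (1 / ε) * W (U (x, t)))
    (y : EuclideanSpace ℝ (Fin n)) (hs : b < s) :
    AntitoneOn (fun t ↦ ∫ x, gaussianWeight (n - 1) y (s - t) x * energyDensity W ε U (x, t))
      (Set.Icc a b) :=
  have hW1 : ContDiff ℝ 1 W := hW.of_le one_le_two
  antitoneOn_integral_gaussianWeight_mul (contDiff_energyDensity hW1 ε hU.contDiff_two)
    (hU.energyDensity_mem_polyGrowthC1 hW1).2.1
    (hU.timeDeriv_energyDensity_mem_polyGrowth hε.ne' hW) hs fun _ ht ↦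
      hU.integral_gaussianWeight_mul_weightedTimeDeriv_nonpos hε hW hdisc y hs
        (Set.Ioo_subset_Icc_self ht)

end IsAllenCahnFlow

/-! ### Area growth -/

/-- The energy measure `μᵗ` of `U` at time `t`: the measure on `ℝⁿ` whose density is the energy
density of `U` at that time. -/
noncomputable def energyMeasure (W : ℝ → ℝ) (ε : ℝ) (U : EuclideanSpace ℝ (Fin n) × ℝ → ℝ)
    (t : ℝ) : Measure (EuclideanSpace ℝ (Fin n)) :=
  volume.withDensity fun x ↦ ENNReal.ofReal (energyDensity W ε U (x, t))

lemma energyDensity_nonneg (hε : 0 < ε)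
    (hdisc : (ε / 2) * ∑ i, ∂[i] U p ^ 2 ≤ (1 / ε) * W (U p)) : 0 ≤ energyDensity W ε U p := by
  have hgrad : 0 ≤ (ε / 2) * ∑ i, ∂[i] U p ^ 2 := by positivity
  exact add_nonneg hgrad (hgrad.trans hdisc)

lemma lintegral_gaussianWeight_energyMeasure {I : Set ℝ} {t τ : ℝ}
    (he : energyDensity W ε U ∈ polyGrowth _ I) (he0 : ∀ x, 0 ≤ energyDensity W ε U (x, t))
    (ht : t ∈ I) (m : ℝ) (y : EuclideanSpace ℝ (Fin n)) (hτ : 0 < τ) :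
    ∫⁻ x, ENNReal.ofReal (gaussianWeight m y τ x) ∂energyMeasure W ε U t =
      ENNReal.ofReal (∫ x, gaussianWeight m y τ x * energyDensity W ε U (x, t)) := by
  have hρ : Measurable fun x ↦ ENNReal.ofReal (gaussianWeight m y τ x) :=
    (continuous_gaussianWeight m y τ).measurable.ennreal_ofReal
  have hdens : Measurable fun x ↦ ENNReal.ofReal (energyDensity W ε U (x, t)) :=
    (continuous_slice_of_mem_polyGrowth he ht).measurable.ennreal_ofReal
  rw [energyMeasure, lintegral_withDensity_eq_lintegral_mul _ hdens hρ,
    ofReal_integral_eq_lintegral_ofReal (integrable_gaussianWeight_mul he m y hτ ht)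
      (.of_forall fun x ↦ mul_nonneg (gaussianWeight_pos hτ).le (he0 x))]
  simp_rw [Pi.mul_apply, ENNReal.ofReal_mul (gaussianWeight_pos hτ).le, mul_comm]

lemma measure_ball_le_areaRatio_mul (μ : Measure (EuclideanSpace ℝ (Fin n)))
    (x : EuclideanSpace ℝ (Fin n)) {R : ℝ} (hR : 0 < R) :
    μ (ball x R) ≤ areaRatio n μ * ENNReal.ofReal (R ^ ((n : ℝ) - 1)) := by
  rw [← ENNReal.div_le_iff (by simpa using rpow_pos_of_pos hR _) ENNReal.ofReal_ne_top]
  exact le_iSup_of_le x (le_iSup₂_of_le R hR le_rfl)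

lemma areaRatio_le {μ : Measure (EuclideanSpace ℝ (Fin n))} {A : ℝ≥0∞}
    (hμ : ∀ x R, 0 < R → μ (ball x R) ≤ A * ENNReal.ofReal (R ^ ((n : ℝ) - 1))) :
    areaRatio n μ ≤ A :=
  iSup_le fun x ↦ iSup₂_le fun R hR ↦ ENNReal.div_le_of_le_mul (hμ x R hR)

/-- The constant of the area growth bound in dimension `n`: the loss `exp (1 / 4)` of comparing a
ball with a Gaussian, times the Gaussian mass of a measure with area ratio one. -/
noncomputable def areaGrowthConst (n : ℕ) : ℝ≥0∞ :=
  ENNReal.ofReal (exp (1 / 4)) * gaussianMassBound (n - 1)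

lemma areaGrowthConst_pos (n : ℕ) : 0 < areaGrowthConst n :=
  ENNReal.mul_pos (by simp [exp_pos]) (gaussianMassBound_pos _).ne'

lemma areaGrowthConst_ne_top (n : ℕ) : areaGrowthConst n ≠ ⊤ :=
  ENNReal.mul_ne_top ENNReal.ofReal_ne_top (gaussianMassBound_ne_top _)

theorem IsAllenCahnFlow.areaRatio_energyMeasure_le {a b : ℝ} (hab : a ≤ b)
    (hU : IsAllenCahnFlow W ε (Set.Icc a b) U) (hε : 0 < ε) (hW : ContDiff ℝ 2 W)
    (hdisc : ∀ x, ∀ t ∈ Set.Icc a b,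
      (ε / 2) * ∑ i, ∂[i] U (x, t) ^ 2 ≤ (1 / ε) * W (U (x, t))) :
    areaRatio n (energyMeasure W ε U b) ≤
      areaGrowthConst n * areaRatio n (energyMeasure W ε U a) := by
  have ha : a ∈ Set.Icc a b := Set.left_mem_Icc.2 hab
  have hb : b ∈ Set.Icc a b := Set.right_mem_Icc.2 hab
  have he := (hU.energyDensity_mem_polyGrowthC1 (hW.of_le one_le_two)).2.1
  have he0 {t : ℝ} (ht : t ∈ Set.Icc a b) (x : EuclideanSpace ℝ (Fin n)) :
      0 ≤ energyDensity W ε U (x, t) := energyDensity_nonneg hε (hdisc x t ht)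
  refine areaRatio_le fun y R hR ↦ ?_
  have hR2 : 0 < R ^ 2 := by positivity
  have hτ : 0 < b + R ^ 2 - a := by linarith
  calc energyMeasure W ε U b (ball y R)
      ≤ ENNReal.ofReal (exp (1 / 4) * R ^ ((n : ℝ) - 1)) *
          ∫⁻ x, ENNReal.ofReal (gaussianWeight (n - 1) y (R ^ 2) x) ∂energyMeasure W ε U b :=
        measure_ball_le_lintegral_gaussianWeight _ _ _ hR
    _ ≤ ENNReal.ofReal (exp (1 / 4) * R ^ ((n : ℝ) - 1)) *
          ∫⁻ x, ENNReal.ofReal (gaussianWeight (n - 1) y (b + R ^ 2 - a) x)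
            ∂energyMeasure W ε U a := by
        rw [lintegral_gaussianWeight_energyMeasure he (he0 hb) hb _ y hR2,
          lintegral_gaussianWeight_energyMeasure he (he0 ha) ha _ y hτ]
        gcongr _ * ENNReal.ofReal ?_
        simpa using hU.antitoneOn_integral_gaussianWeight_mul_energyDensity hε hW hdisc y
          (lt_add_of_pos_right b hR2) ha hb hab
    _ ≤ ENNReal.ofReal (exp (1 / 4) * R ^ ((n : ℝ) - 1)) *
          (gaussianMassBound (n - 1) * areaRatio n (energyMeasure W ε U a)) := by
        gcongr
        exact lintegral_gaussianWeight_le _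
          (fun _ hr ↦ measure_ball_le_areaRatio_mul _ y hr) hτ
    _ = areaGrowthConst n * areaRatio n (energyMeasure W ε U a) *
          ENNReal.ofReal (R ^ ((n : ℝ) - 1)) := by
        rw [areaGrowthConst, ENNReal.ofReal_mul (exp_pos _).le]
        ring

lemma norm_gradient_slice_sq {x : EuclideanSpace ℝ (Fin n)} {t : ℝ}
    (hU : DifferentiableAt ℝ U (x, t)) :
    ‖gradient (fun y ↦ U (y, t)) x‖ ^ 2 = ∑ i, ∂[i] U (x, t) ^ 2 := by
  rw [EuclideanSpace.real_norm_sq_eq]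
  refine Finset.sum_congr rfl fun i _ ↦ ?_
  rw [← fderiv_slice_apply hU, ← toDual_gradient, InnerProductSpace.toDual_apply_apply,
    EuclideanSpace.inner_single_right]
  simp

lemma spaceLaplacian_slice (hU : ContDiff ℝ 2 U) (x : EuclideanSpace ℝ (Fin n)) (t : ℝ) :
    spaceLaplacian n (fun y ↦ U (y, t)) x = ∑ i, ∂[i] (∂[i] U) (x, t) := by
  have hderiv (i : Fin n) : ContDiff ℝ 1 (∂[i] U) := contDiff_dirDeriv (by simpa) _
  simp_rw [spaceLaplacian, fderiv_slice_apply (hU.differentiable two_ne_zero _),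
    fderiv_slice_apply ((hderiv _).differentiable one_ne_zero _)]

theorem isAllenCahnFlow_of_deriv_eq {I : Set ℝ} (hU : ContDiff ℝ 3 U)
    (hpde : ∀ x, ∀ t ∈ I, deriv (fun r ↦ U (x, r)) t =
      spaceLaplacian n (fun y ↦ U (y, t)) x - (1 / ε ^ 2) * deriv W (U (x, t)))
    (hbd : HasBoundedSpaceDerivs 3 I U) : IsAllenCahnFlow W ε I U where
  contDiff := hU
  bounded := hbd
  solves x t ht := by
    rw [SolvesAllenCahnAt, ← spaceLaplacian_slice (hU.of_le (by norm_num)), ← hpde x t ht,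
      (hasDerivAt_time (hU.differentiable three_ne_zero _)).deriv]

end Energy

lemma deriv_doubleWell (r : ℝ) :
    deriv (fun r : ℝ ↦ (1 / 2) * (1 - r ^ 2) ^ 2) r = 2 * r * (r ^ 2 - 1) := by
  have h := (((hasDerivAt_pow 2 r).const_sub 1).pow 2).const_mul (1 / 2)
  rw [HasDerivAt.deriv (by simpa using h)]
  ring

end AllenCahn

open AllenCahn in
theorem allen_cahn_uniform_area_growth_general (n : ℕ) :
    ∃ C : ℝ≥0∞, 0 < C ∧ C ≠ ⊤ ∧
      ∀ (W : ℝ → ℝ), ContDiff ℝ 2 W →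
      ∀ (ε : ℝ), 0 < ε →
      ∀ (u : EuclideanSpace ℝ (Fin n) → ℝ → ℝ),
        ContDiff ℝ 3 (fun p : EuclideanSpace ℝ (Fin n) × ℝ => u p.1 p.2) →
        (∀ x t, 0 ≤ t →
          deriv (u x) t = spaceLaplacian n (fun y => u y t) x - (1 / ε ^ 2) * deriv W (u x t)) →
        (∀ T > (0 : ℝ), ∃ C' : ℝ, ∀ x, ∀ t ∈ Set.Icc (0 : ℝ) T, ∀ i ≤ 3,
          ‖iteratedFDeriv ℝ i (fun y => u y t) x‖ ≤ C') →
        ∀ (μ : ℝ → Measure (EuclideanSpace ℝ (Fin n))),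
          (∀ t, μ t = volume.withDensity (fun x =>
            ENNReal.ofReal ((ε / 2) * ‖gradient (fun y => u y t) x‖ ^ 2
              + (1 / ε) * W (u x t)))) →
          (∀ x t, 0 ≤ t → (ε / 2) * ‖gradient (fun y => u y t) x‖ ^ 2 ≤ (1 / ε) * W (u x t)) →
          ∀ t : ℝ, 0 ≤ t → areaRatio n (μ t) ≤ C * areaRatio n (μ 0) := by
  refine ⟨areaGrowthConst n, areaGrowthConst_pos n, areaGrowthConst_ne_top n,
    fun W hW ε hε u hu hpde hbd μ hμ hdisc t ht ↦ ?_⟩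
  set U : EuclideanSpace ℝ (Fin n) × ℝ → ℝ := fun p ↦ u p.1 p.2
  have hgrad (x r) := norm_gradient_slice_sq (hu.differentiable three_ne_zero (x, r))
  have hflow : IsAllenCahnFlow W ε (Set.Icc 0 t) U := by
    obtain ⟨K, hK⟩ := hbd (t + 1) (by linarith)
    exact isAllenCahnFlow_of_deriv_eq hu (fun x r hr ↦ hpde x r hr.1)
      ⟨K, fun x r hr ↦ hK x r ⟨hr.1, by linarith [hr.2]⟩⟩
  have hμU (r : ℝ) : μ r = energyMeasure W ε U r := by
    simpa only [energyMeasure, energyDensity, ← hgrad] using hμ r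
  rw [hμU, hμU]
  exact hflow.areaRatio_energyMeasure_le ht hε hW fun x r hr ↦ hgrad x r ▸ hdisc x r hr.1

/-- Uniform area growth bound under the Allen–Cahn flow on `ℝⁿ`: there is a constant
`C > 0` depending only on `n` such that if the discrepancy stays nonpositive and
`sup_{x,R>0} μ⁰(B_R(x))/R^{n-1} < ∞`, then for all `t ≥ 0`,
`sup_{x,R>0} μᵗ(B_R(x))/R^{n-1} ≤ C · sup_{x,R>0} μ⁰(B_R(x))/R^{n-1}`. -/
theorem allen_cahn_uniform_area_growth (n : ℕ) (hn : 1 ≤ n) :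
    ∃ C : ℝ≥0∞, 0 < C ∧ C ≠ ⊤ ∧
      ∀ (ε : ℝ), 0 < ε →
      ∀ (u : EuclideanSpace ℝ (Fin n) → ℝ → ℝ),
        ContDiff ℝ (⊤ : ℕ∞) (fun p : EuclideanSpace ℝ (Fin n) × ℝ => u p.1 p.2) →
        (∀ x t, |u x t| ≤ 1) →
        (∀ x, ∀ t, 0 ≤ t →
          deriv (u x) t = spaceLaplacian n (fun y => u y t) x
            - (1 / ε ^ 2) * (2 * u x t * ((u x t) ^ 2 - 1))) →
        (∀ T > (0 : ℝ), ∃ C' : ℝ, ∀ x, ∀ t ∈ Set.Icc (0 : ℝ) T,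
          (∀ i ≤ 3, ‖iteratedFDeriv ℝ i (fun y => u y t) x‖ ≤ C') ∧
            |deriv (u x) t| ≤ C') →
        ∀ (μ : ℝ → Measure (EuclideanSpace ℝ (Fin n))),
          (∀ t, μ t = volume.withDensity (fun x =>
            ENNReal.ofReal ((ε / 2) * ‖gradient (fun y => u y t) x‖ ^ 2
              + (1 / ε) * ((1 / 2) * (1 - (u x t) ^ 2) ^ 2)))) →
          (∀ x, ∀ t, 0 ≤ t →
            (ε / 2) * ‖gradient (fun y => u y t) x‖ ^ 2
              ≤ (1 / ε) * ((1 / 2) * (1 - (u x t) ^ 2) ^ 2)) →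
          areaRatio n (μ 0) ≠ ⊤ →
          ∀ t : ℝ, 0 ≤ t → areaRatio n (μ t) ≤ C * areaRatio n (μ 0) := by
  obtain ⟨C, hC0, hC, hmain⟩ := allen_cahn_uniform_area_growth_general n
  exact ⟨C, hC0, hC, fun ε hε u hu _ hpde hbd μ hμ hdisc _ ↦
    hmain (fun r ↦ (1 / 2) * (1 - r ^ 2) ^ 2) (by fun_prop) ε hε u (contDiff_infty.1 hu 3)
      (fun x t ht ↦ by rw [AllenCahn.deriv_doubleWell, hpde x t ht])
      (fun T hT ↦ (hbd T hT).imp fun _ h x t ht ↦ (h x t ht).1) μ hμ hdisc⟩
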